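/- arXiv:1712.00388 — 2 statements merged into one kernel-verified Lean document; each statement's English description precedes it below -/
import Mathlib

section
/- Let n ≥ 1 and let S = (s_{ij}) be a real n×n upper triangular matrix with s_{ii} = 1 and s_{ij} = 0 for i > j. Let C be the n×n cyclic permutation matrix with C_{1,n} = 1, C_{i,i−1} = 1 for 2 ≤ i ≤ n, and all other entries 0 (so Cⁿ = Id). For k ∈ {1,2} set σ_k := (−1)^k, and let A^{(2)}_j, A^{(1)}_j be the pseudo-reflection resp. reflection matrices associated to S (A^{(2)}_j = identity outside row j with row j equal to (s_{1j},…,s_{j−1,j}, 1, −s_{j,j+1},…,−s_{j,n}); A^{(1)}_j = identity outside row j with row j equal to (−s_{1j},…,−s_{j−1,j}, −1, −s_{j,j+1},…,−s_{j,n})). For j ∈ {1,…,n} define the n×n matrix R^{(k)}_j whose first row is (−s_{j,j+1}, …, −s_{j,n}, σ_k·s_{1j}, …, σ_k·s_{j−1,j}, σ_k) (columns 1,…,n−j carry −s_{j,j+1},…,−s_{j,n}, columns n−j+1,…,n−1 carry σ_k·s_{1j},…,σ_k·s_{j−1,j}, column n carries σ_k), whose entries satisfy (R^{(k)}_j)_{i+1,i}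 = 1 for 1 ≤ i ≤ n−1, and all other entries 0. Then R^{(k)}_j = C^{−(j−1)}·A^{(k)}_j·C^{j} for all j and k, and (−1)^k·S⁻¹Sᵀ = R^{(k)}_1·R^{(k)}_2·⋯·R^{(k)}_n. -/
open Matrix

/-!
Write `σ` for `(-1) ^ k` and `L = σ Sᵀ`. Since `S` is unit upper and `L` lower triangular,
`A j = 1 + e_j (L - S)_j`, which is an elementary step of the Gauss–Seidel method for the system
`S x' = L x`: it solves the `j`-th equation for `x'_j`. In a backward sweep the entries after the
`j`-th, which `S` multiplies, are already new, and those up to the `j`-th, which `L` multiplies, are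
still old. So the full sweep solves the system, that is, `A 0 * ⋯ * A (n - 1) = S⁻¹ L`.
Conjugating by powers of `C` shifts the indices cyclically, hence
`C ^ j * R j = A j * C ^ (j + 1)`, and the powers of `C` telescope in the product of the `R j`.
-/

theorem mul_prod_ofFn_eq_prod_ofFn_mul {M : Type*} [Monoid M] {n : ℕ} {a b : Fin n → M} {c : ℕ → M}
    (h : ∀ j : Fin n, c j * b j = a j * c (j + 1)) :
    c 0 * (List.ofFn b).prod = (List.ofFn a).prod * c n := by
  induction n with
  | zero => simp
  | succ n ih =>
    have hlast : c n * b (Fin.last n) = a (Fin.last n) * c (n + 1) := h (Fin.last n)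
    rw [List.ofFn_succ', List.ofFn_succ', List.concat_eq_append, List.concat_eq_append,
      List.prod_append, List.prod_append, List.prod_singleton, List.prod_singleton, ← mul_assoc,
      ih fun j => h j.castSucc, mul_assoc, hlast, mul_assoc]

section GaussSeidel

variable {K : Type*} {n : ℕ}

/-- The matrix whose rows with index at least `m` are those of `U` and whose other rows are those of
the identity: the equations with index at least `m`, which a backward sweep down to row `m` has
solved, while the other variables are untouched. -/
def trailingRows [Zero K] [One K] (U : Matrix (Fin n) (Fin n) K) (m : ℕ) :
    Matrix (Fin n) (Fin n) K :=
  of fun i => if m ≤ i then U i else (1 : Matrix (Fin n) (Fin n) K) i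

/-- The elementary step of the Gauss–Seidel method at row `j`, for a unit upper triangular `U`: it
changes only the entry `x j` of a vector `x`, to the value `x' j` that solves the `j`-th equation of
`U x' = L x`. -/
def gaussSeidelStep [Ring K] (U L : Matrix (Fin n) (Fin n) K) (j : Fin n) :
    Matrix (Fin n) (Fin n) K :=
  1 + vecMulVec (Pi.single j 1) ((L - U) j)

theorem trailingRows_zero [Zero K] [One K] (U : Matrix (Fin n) (Fin n) K) :
    trailingRows U 0 = U := by
  ext i l
  simp [trailingRows]

theorem trailingRows_card [Zero K] [One K] (U : Matrix (Fin n) (Fin n) K) :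
    trailingRows U n = 1 := by
  ext i l
  rw [trailingRows, of_apply, if_neg i.isLt.not_ge]

theorem trailingRows_succ_updateRow [Zero K] [One K] (U : Matrix (Fin n) (Fin n) K) (j : Fin n) :
    (trailingRows U (j + 1)).updateRow j (U j) = trailingRows U j := by
  ext i l
  obtain rfl | hij := eq_or_ne i j
  · simp [trailingRows]
  · have hlt : j < i ↔ j ≤ i := hij.symm.le_iff_lt.symm
    simp [trailingRows, hij, hlt]

theorem trailingRows_mulVec_single [Semiring K] {U : Matrix (Fin n) (Fin n) K}
    (hU : U.IsUpperTriangular) (hdiag : ∀ i, U i i = 1) (j : Fin n) :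
    trailingRows U j *ᵥ Pi.single j 1 = Pi.single j 1 := by
  ext i
  rw [mulVec_single_one, col_apply, trailingRows, of_apply]
  obtain hij | rfl | hji := lt_trichotomy i j
  · simp [hij.not_ge, hij.ne]
  · simp [hdiag]
  · simp [hji.le, hji.ne', hU hji]

theorem vecMul_trailingRows_succ [Semiring K] (U : Matrix (Fin n) (Fin n) K)
    {L : Matrix (Fin n) (Fin n) K} (hL : L.IsLowerTriangular) (j : Fin n) :
    L j ᵥ* trailingRows U (j + 1) = L j := by
  ext l
  have hterm (i : Fin n) : L j i * trailingRows U (j + 1) i l = if i = l then L j i else 0 := by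
    obtain hij | hji := le_or_gt i j
    · simp [trailingRows, hij.not_gt, one_apply]
    · simp [hL (show OrderDual.toDual i < OrderDual.toDual j from hji)]
  simp [vecMul, dotProduct, hterm]

theorem updateRow_one_mul_trailingRows_succ [Semiring K] (U : Matrix (Fin n) (Fin n) K)
    {L : Matrix (Fin n) (Fin n) K} (hL : L.IsLowerTriangular) (j : Fin n) :
    updateRow 1 j (L j) * trailingRows U (j + 1) = (trailingRows U (j + 1)).updateRow j (L j) := by
  rw [updateRow_mul, Matrix.one_mul, vecMul_trailingRows_succ U hL]

theorem trailingRows_mul_gaussSeidelStep [Ring K] {U : Matrix (Fin n) (Fin n) K}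
    (hU : U.IsUpperTriangular) (hdiag : ∀ i, U i i = 1) (L : Matrix (Fin n) (Fin n) K)
    (j : Fin n) :
    trailingRows U j * gaussSeidelStep U L j = (trailingRows U (j + 1)).updateRow j (L j) := by
  rw [gaussSeidelStep, Matrix.mul_add, Matrix.mul_one, mul_vecMulVec,
    trailingRows_mulVec_single hU hdiag, ← trailingRows_succ_updateRow]
  ext i l
  obtain rfl | hij := eq_or_ne i j
  · simp [vecMulVec_apply]
  · simp [vecMulVec_apply, hij]

theorem prod_ofFn_updateRow_one [Semiring K] {L : Matrix (Fin n) (Fin n) K}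
    (hL : L.IsLowerTriangular) :
    (List.ofFn fun j => updateRow (1 : Matrix (Fin n) (Fin n) K) j (L j)).prod = L := by
  have hstep (j : Fin n) :
      trailingRows L j * 1 = updateRow 1 j (L j) * trailingRows L (j + 1) := by
    rw [Matrix.mul_one, updateRow_one_mul_trailingRows_succ L hL, trailingRows_succ_updateRow]
  simpa [trailingRows_zero, trailingRows_card] using (mul_prod_ofFn_eq_prod_ofFn_mul hstep).symm

theorem mul_prod_ofFn_gaussSeidelStep [Ring K] {U L : Matrix (Fin n) (Fin n) K}
    (hU : U.IsUpperTriangular) (hdiag : ∀ i, U i i = 1) (hL : L.IsLowerTriangular) :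
    U * (List.ofFn (gaussSeidelStep U L)).prod = L := by
  have hstep (j : Fin n) : trailingRows U j * gaussSeidelStep U L j =
      updateRow 1 j (L j) * trailingRows U (j + 1) := by
    rw [trailingRows_mul_gaussSeidelStep hU hdiag, updateRow_one_mul_trailingRows_succ U hL]
  simpa [trailingRows_zero, trailingRows_card, prod_ofFn_updateRow_one hL] using
    mul_prod_ofFn_eq_prod_ofFn_mul hstep

end GaussSeidel

section Rotation

variable {K : Type*} {n : ℕ}

theorem val_finRotate_pow (m : ℕ) (i : Fin n) : ((finRotate n ^ m) i : ℕ) = (i + m) % n := by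
  have := i.neZero
  induction m with
  | zero => simp [Nat.mod_eq_of_lt i.isLt]
  | succ m ih =>
    rw [pow_succ', Equiv.Perm.mul_apply, finRotate_apply, Fin.val_add, ih, Fin.val_one',
      ← Nat.add_mod, add_assoc]

theorem finRotate_pow_card : finRotate n ^ n = 1 := by
  ext i
  simp [val_finRotate_pow, Nat.mod_eq_of_lt i.isLt]

theorem finRotate_pow_val_apply_eq_iff (i j : Fin n) :
    (finRotate n ^ (j : ℕ)) i = j ↔ (i : ℕ) = 0 := by
  have := j.neZero
  have hzero : (finRotate n ^ (j : ℕ)) 0 = j := by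
    ext
    simp [val_finRotate_pow, Nat.mod_eq_of_lt j.isLt]
  rw [Fin.val_eq_zero_iff, ← (finRotate n ^ (j : ℕ)).apply_eq_iff_eq (y := 0), hzero]

theorem finRotate_pow_apply_eq_pow_succ_apply_iff (m : ℕ) (i l : Fin n) :
    (finRotate n ^ m) i = (finRotate n ^ (m + 1)) l ↔ (i : ℕ) = (l + 1) % n := by
  rw [pow_succ, Equiv.Perm.mul_apply, EmbeddingLike.apply_eq_iff_eq, Fin.ext_iff,
    ← val_finRotate_pow 1 l, pow_one]

theorem finRotate_pow_val_succ_apply_lt_iff (j l : Fin n) :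
    (finRotate n ^ (j + 1 : ℕ)) l < j ↔ n - 1 - j ≤ (l : ℕ) ∧ (l : ℕ) < n - 1 := by
  rw [Fin.lt_def, val_finRotate_pow]
  obtain hlt | hge := lt_or_ge (l + (j + 1) : ℕ) n
  · rw [Nat.mod_eq_of_lt hlt]
    omega
  · rw [Nat.mod_eq_sub_mod hge, Nat.mod_eq_of_lt (by omega)]
    omega

theorem finRotate_pow_val_succ_apply_eq_iff (j l : Fin n) :
    (finRotate n ^ (j + 1 : ℕ)) l = j ↔ (l : ℕ) = n - 1 := by
  rw [pow_succ, Equiv.Perm.mul_apply, finRotate_pow_val_apply_eq_iff, ← pow_one (finRotate n),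
    val_finRotate_pow, ← Nat.dvd_iff_mod_eq_zero]
  constructor
  · intro hdvd
    have hle := Nat.le_of_dvd (Nat.succ_pos _) hdvd
    omega
  · intro hl
    rw [hl, Nat.sub_add_cancel j.pos]

-- `permMatrixHom τ` maps `e_l` to `e_(τ l)`, while `τ.permMatrix` is its transpose.
theorem permMatrixHom_finRotate_apply [NonAssocSemiring K] (i l : Fin n) :
    permMatrixHom (R := K) (finRotate n) i l = if (i : ℕ) = (l + 1) % n then 1 else 0 := by
  have hsymm : (finRotate n).symm i = l ↔ (i : ℕ) = (l + 1) % n := by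
    rw [Equiv.symm_apply_eq, Fin.ext_iff, ← val_finRotate_pow 1 l, pow_one]
  rw [permMatrixHom_apply, Equiv.Perm.permMatrix, PEquiv.toMatrix_toPEquiv_apply, Pi.single_apply,
    Equiv.Perm.inv_def]
  simp only [eq_comm (a := l), hsymm]

theorem permMatrixHom_finRotate_pow_card [Semiring K] :
    permMatrixHom (finRotate n) ^ n = (1 : Matrix (Fin n) (Fin n) K) := by
  rw [← map_pow, finRotate_pow_card, map_one]

end Rotation

section PermMatrix

variable {K ι : Type*} [Fintype ι] [DecidableEq ι]

theorem isUnit_permMatrixHom [Semiring K] (τ : Equiv.Perm ι) :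
    IsUnit (permMatrixHom (R := K) τ) :=
  (Group.isUnit τ).map permMatrixHom

theorem inv_permMatrixHom [CommRing K] (τ : Equiv.Perm ι) :
    (permMatrixHom (R := K) τ)⁻¹ = permMatrixHom τ⁻¹ :=
  inv_eq_left_inv (by rw [← map_mul, inv_mul_cancel, map_one])

theorem permMatrixHom_inv_mul_mul_permMatrixHom [Semiring K] (τ υ : Equiv.Perm ι)
    (M : Matrix ι ι K) :
    permMatrixHom τ⁻¹ * M * permMatrixHom υ = M.submatrix τ υ := by
  rw [permMatrixHom_apply, permMatrixHom_apply, inv_inv, PEquiv.toMatrix_toPEquiv_mul,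
    PEquiv.mul_toMatrix_toPEquiv, submatrix_submatrix]
  rfl

end PermMatrix

section PseudoReflection

variable {K : Type*} {n : ℕ}

/-- The pseudo-reflection matrix `A j` attached to `S`, for an arbitrary scalar `σ` in place of
`(-1) ^ k`. -/
def pseudoReflection [Ring K] (S : Matrix (Fin n) (Fin n) K) (σ : K) (j : Fin n) :
    Matrix (Fin n) (Fin n) K :=
  of fun i l =>
    if i = j then (if l < j then σ * S l j else if l = j then σ else -S j l)
    else (if i = l then 1 else 0)

/-- The companion-like matrix `R j` attached to `S`, for an arbitrary scalar `σ` in place of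
`(-1) ^ k`. Its first row is row `j` of `pseudoReflection S σ j`, cyclically rotated so that the
entry in column `j` comes last. -/
def rotatedPseudoReflection [Ring K] (S : Matrix (Fin n) (Fin n) K) (σ : K) (j : Fin n) :
    Matrix (Fin n) (Fin n) K :=
  of fun i l =>
    if (i : ℕ) = 0 then
      (if (l : ℕ) < n - 1 - j then -S j ⟨(j + l + 1) % n, Nat.mod_lt _ j.pos⟩
       else if (l : ℕ) < n - 1 then σ * S ⟨(j + l + 1) % n, Nat.mod_lt _ j.pos⟩ j
       else σ)
    else (if (i : ℕ) = l + 1 then 1 else 0)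

theorem pseudoReflection_eq_gaussSeidelStep [Ring K] {S : Matrix (Fin n) (Fin n) K}
    (hdiag : ∀ i, S i i = 1) (hS : S.IsUpperTriangular) (σ : K) :
    pseudoReflection S σ = gaussSeidelStep S (σ • Sᵀ) := by
  ext j i l
  obtain rfl | hij := eq_or_ne i j
  · obtain hl | rfl | hl := lt_trichotomy l i
    · simp [pseudoReflection, gaussSeidelStep, vecMulVec_apply, hl, hl.ne', hS hl]
    · simp [pseudoReflection, gaussSeidelStep, vecMulVec_apply, hdiag]
    · simp [pseudoReflection, gaussSeidelStep, vecMulVec_apply, hl.not_gt, hl.ne, hl.ne', hS hl]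
  · simp [pseudoReflection, gaussSeidelStep, vecMulVec_apply, hij, one_apply]

theorem rotatedPseudoReflection_eq_submatrix [Ring K] (S : Matrix (Fin n) (Fin n) K) (σ : K)
    (j : Fin n) :
    rotatedPseudoReflection S σ j =
      (pseudoReflection S σ j).submatrix (finRotate n ^ (j : ℕ)) (finRotate n ^ (j + 1 : ℕ)) := by
  ext i l
  have hcol : (⟨(j + l + 1) % n, Nat.mod_lt _ j.pos⟩ : Fin n) = (finRotate n ^ (j + 1 : ℕ)) l := by
    ext
    rw [val_finRotate_pow, Nat.add_comm (j : ℕ), Nat.add_assoc]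
  simp only [rotatedPseudoReflection, pseudoReflection, of_apply, submatrix_apply, hcol,
    finRotate_pow_val_apply_eq_iff, finRotate_pow_val_succ_apply_lt_iff,
    finRotate_pow_val_succ_apply_eq_iff, finRotate_pow_apply_eq_pow_succ_apply_iff]
  obtain hl | hl : (l : ℕ) + 1 < n ∨ (l : ℕ) + 1 = n := by omega
  · rw [Nat.mod_eq_of_lt hl]
    grind
  · rw [hl, Nat.mod_self]
    grind

theorem rotatedPseudoReflection_eq_conj [CommRing K] (S : Matrix (Fin n) (Fin n) K) (σ : K)
    (j : Fin n) :
    rotatedPseudoReflection S σ j = (permMatrixHom (finRotate n) ^ (j : ℕ))⁻¹ *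
      pseudoReflection S σ j * permMatrixHom (finRotate n) ^ (j + 1 : ℕ) := by
  rw [← map_pow, ← map_pow, inv_permMatrixHom, permMatrixHom_inv_mul_mul_permMatrixHom,
    rotatedPseudoReflection_eq_submatrix]

theorem prod_ofFn_rotatedPseudoReflection [CommRing K] (S : Matrix (Fin n) (Fin n) K) (σ : K) :
    (List.ofFn (rotatedPseudoReflection S σ)).prod =
      (List.ofFn (pseudoReflection S σ)).prod := by
  have hstep (j : Fin n) :
      permMatrixHom (finRotate n) ^ (j : ℕ) * rotatedPseudoReflection S σ j =
        pseudoReflection S σ j * permMatrixHom (finRotate n) ^ (j + 1 : ℕ) := by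
    rw [rotatedPseudoReflection_eq_conj, Matrix.mul_assoc, mul_nonsing_inv_cancel_left]
    exact (isUnit_iff_isUnit_det _).mp ((isUnit_permMatrixHom _).pow _)
  simpa [permMatrixHom_finRotate_pow_card, -permMatrixHom_apply] using
    mul_prod_ofFn_eq_prod_ofFn_mul (c := (permMatrixHom (finRotate n) ^ ·)) hstep

theorem prod_ofFn_pseudoReflection [CommRing K] {S : Matrix (Fin n) (Fin n) K}
    (hdiag : ∀ i, S i i = 1) (hS : S.IsUpperTriangular) (σ : K) :
    (List.ofFn (pseudoReflection S σ)).prod = σ • (S⁻¹ * Sᵀ) := by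
  have hdet : IsUnit S.det := by simp [det_of_isUpperTriangular hS, hdiag]
  have hlower : (σ • Sᵀ).IsLowerTriangular := fun i l hil => by
    rw [Matrix.smul_apply, hS.transpose hil, smul_zero]
  have hsweep : S * (List.ofFn (pseudoReflection S σ)).prod = σ • Sᵀ := by
    rw [pseudoReflection_eq_gaussSeidelStep hdiag hS]
    exact mul_prod_ofFn_gaussSeidelStep hS hdiag hlower
  rw [← Matrix.mul_smul, ← hsweep, nonsing_inv_mul_cancel_left _ _ hdet]

end PseudoReflection

theorem stmt3_general {K : Type*} [CommRing K] {n : ℕ} (S : Matrix (Fin n) (Fin n) K)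
    (hdiag : ∀ i, S i i = 1) (hS : S.IsUpperTriangular) (σ : K) (C : Matrix (Fin n) (Fin n) K)
    (hC : ∀ i l : Fin n, C i l = if (i : ℕ) = ((l : ℕ) + 1) % n then 1 else 0)
    (A R : Fin n → Matrix (Fin n) (Fin n) K)
    (hA : ∀ j i l, A j i l =
      if i = j then (if l < j then σ * S l j else if l = j then σ else -S j l)
      else (if i = l then 1 else 0))
    (hR : ∀ j i l, R j i l =
      if (i : ℕ) = 0 then
        (if (l : ℕ) < n - 1 - (j : ℕ) then
            -S j ⟨((j : ℕ) + (l : ℕ) + 1) % n, Nat.mod_lt _ j.pos⟩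
         else if (l : ℕ) < n - 1 then
            σ * S ⟨((j : ℕ) + (l : ℕ) + 1) % n, Nat.mod_lt _ j.pos⟩ j
         else σ)
      else (if (i : ℕ) = (l : ℕ) + 1 then 1 else 0)) :
    C ^ n = 1 ∧
    (∀ j : Fin n, R j = (C ^ (j : ℕ))⁻¹ * A j * C ^ ((j : ℕ) + 1)) ∧
    σ • (S⁻¹ * Sᵀ) = (List.ofFn R).prod := by
  obtain rfl : A = pseudoReflection S σ := funext fun j => Matrix.ext (hA j)
  obtain rfl : R = rotatedPseudoReflection S σ := funext fun j => Matrix.ext (hR j)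
  obtain rfl : C = permMatrixHom (finRotate n) :=
    Matrix.ext fun i l => (hC i l).trans (permMatrixHom_finRotate_apply i l).symm
  exact ⟨permMatrixHom_finRotate_pow_card, rotatedPseudoReflection_eq_conj S σ,
    by rw [prod_ofFn_rotatedPseudoReflection, prod_ofFn_pseudoReflection hdiag hS]⟩

/-- Cyclic conjugates of the (pseudo-)reflection matrices: with `C` the cyclic
permutation matrix (`Cⁿ = 1`), the companion-like matrices
`R^{(k)}_j = C^{-(j-1)} A^{(k)}_j C^j` satisfy
`(-1)^k ⬝ S⁻¹ Sᵀ = R^{(k)}_1 ⋯ R^{(k)}_n`. Indices are 0-based: `j : Fin n`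
corresponds to the 1-based index `j+1`. -/
theorem stmt3 (n : ℕ) (hn : 1 ≤ n) (S : Matrix (Fin n) (Fin n) ℝ)
    (hdiag : ∀ i, S i i = 1) (hlow : ∀ i j : Fin n, j < i → S i j = 0)
    (k : ℕ) (hk : k = 1 ∨ k = 2)
    (C : Matrix (Fin n) (Fin n) ℝ)
    (hC : ∀ i l : Fin n, C i l = if (i : ℕ) = ((l : ℕ) + 1) % n then 1 else 0)
    (A R : Fin n → Matrix (Fin n) (Fin n) ℝ)
    (hA : ∀ j i l, A j i l =
      if i = j then
        (if l < j then (-1:ℝ)^k * S l j else if l = j then (-1:ℝ)^k else - S j l)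
      else (if i = l then 1 else 0))
    (hR : ∀ j i l, R j i l =
      if (i : ℕ) = 0 then
        (if (l : ℕ) < n - 1 - (j : ℕ) then
            - S j ⟨((j:ℕ) + (l:ℕ) + 1) % n, Nat.mod_lt _ (by omega)⟩
         else if (l : ℕ) < n - 1 then
            (-1:ℝ)^k * S ⟨((j:ℕ) + (l:ℕ) + 1) % n, Nat.mod_lt _ (by omega)⟩ j
         else (-1:ℝ)^k)
      else (if (i : ℕ) = (l : ℕ) + 1 then 1 else 0)) :
    C ^ n = 1 ∧
    (∀ j : Fin n, R j = (C ^ (j : ℕ))⁻¹ * A j * C ^ ((j : ℕ) + 1)) ∧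
    ((-1:ℝ)^k • (S⁻¹ * Sᵀ) = (List.ofFn R).prod) := by
  exact stmt3_general S hdiag (fun i j => hlow i j) ((-1) ^ k) C hC A R hA hR
end

section
/- Let n ≥ 1, k ∈ {1,2}, and let p(x) = xⁿ + p_{n−1}x^{n−1} + ⋯ + p_0 ∈ ℝ[x] be monic with p_{n−j} = (−1)^{k−1}·p_j for all 0 ≤ j ≤ n (p_n := 1). Let S be the upper triangular n×n matrix with S_{ii} = 1 and S_{ij} = p_{n−(j−i)} for i < j, and R the companion matrix of p. Then Rᵀ·Sᵀ·R = Sᵀ, i.e. R preserves the Seifert form L(a,b) = aᵀSᵀb on ℝⁿ; equivalently S·R = R⁻ᵀ·S. -/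
open Matrix

/-!
Right multiplication by the companion matrix `R` shifts the columns of a matrix one step to the left
and subtracts multiples of the first column. Since `S` is upper triangular with constant diagonals,
its first column is the first basis vector, and `S R` is `S` moved down by one row,
with `-c 0` in the upper right corner and zeros elsewhere in the first row and the last column.
Applying `R` once more, now to `(S R)ᵀ`, moves everything one step along the diagonal: the result
agrees with `Sᵀ` outside its last row because `S` is Toeplitz, and its last row has the entries
`c 0 * c (n - j)` and `c 0 ^ 2`, which the symmetry of the coefficients turns into `c j` and `1`.
-/

theorem mulVec_dotProduct_mulVec_mulVec {m n K : Type*} [Fintype m] [Fintype n]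
    [NonUnitalCommSemiring K] (R : Matrix m n K) (M : Matrix m m K) (a b : n → K) :
    (R *ᵥ a) ⬝ᵥ (M *ᵥ (R *ᵥ b)) = a ⬝ᵥ ((Rᵀ * M * R) *ᵥ b) := by
  rw [← mulVec_mulVec, ← mulVec_mulVec, dotProduct_mulVec a, vecMul_transpose]

theorem mul_eq_transpose_inv_mul_of_transpose_mul_mul_eq {n K : Type*} [Fintype n] [DecidableEq n]
    [CommRing K] {S R : Matrix n n K} (hS : IsUnit S.det) (h : Rᵀ * S * R = S) :
    S * R = (R⁻¹)ᵀ * S := by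
  have hR : IsUnit Rᵀ.det := by
    rw [← h, det_mul, det_mul, mul_assoc] at hS
    exact isUnit_of_mul_isUnit_left hS
  calc S * R = Rᵀ⁻¹ * (Rᵀ * (S * R)) := (nonsing_inv_mul_cancel_left _ _ hR).symm
    _ = (R⁻¹)ᵀ * S := by rw [← Matrix.mul_assoc Rᵀ, h, transpose_nonsing_inv]

/-- The upper unitriangular Toeplitz matrix `S(p)` of the polynomial `p` of degree `n` with
coefficients `c 0, …, c n`; its transpose is the Gram matrix of the Seifert form. The diagonal is
`1` whatever the value of `c n`. -/
def horMatrix {K : Type*} [Zero K] [One K] (n : ℕ) (c : ℕ → K) : Matrix (Fin n) (Fin n) K :=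
  of fun i j => if i = j then 1 else if i < j then c (n - ((j : ℕ) - (i : ℕ))) else 0

/-- The companion matrix `R(p)` of the monic polynomial `p` of degree `n` with lower coefficients
`c 0, …, c (n - 1)`, in the convention where the coefficients fill the first row, in decreasing
order of degree. -/
def companionMatrix {K : Type*} [Zero K] [One K] [Neg K] (n : ℕ) (c : ℕ → K) :
    Matrix (Fin n) (Fin n) K :=
  of fun i l => if (i : ℕ) = 0 then -c (n - 1 - (l : ℕ)) else
    if (i : ℕ) = (l : ℕ) + 1 then 1 else 0

section HorMatrix

variable {K : Type*} [Zero K] [One K] {n m : ℕ}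

theorem horMatrix_apply_self (c : ℕ → K) (i : Fin n) : horMatrix n c i i = 1 := by
  simp [horMatrix]

theorem horMatrix_apply_of_lt (c : ℕ → K) {i j : Fin n} (h : i < j) :
    horMatrix n c i j = c (n - ((j : ℕ) - (i : ℕ))) := by
  simp [horMatrix, h, h.ne]

theorem horMatrix_apply_of_gt (c : ℕ → K) {i j : Fin n} (h : j < i) : horMatrix n c i j = 0 := by
  simp [horMatrix, h.ne', h.not_gt]

theorem isUpperTriangular_horMatrix (c : ℕ → K) : (horMatrix n c).IsUpperTriangular :=
  fun _ _ h => horMatrix_apply_of_gt c h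

theorem horMatrix_zero_succ (c : ℕ → K) (l : Fin m) :
    horMatrix (m + 1) c 0 l.succ = c (m - (l : ℕ)) := by
  simp [horMatrix_apply_of_lt c l.succ_pos]

theorem horMatrix_castSucc_last (c : ℕ → K) (i : Fin m) :
    horMatrix (m + 1) c i.castSucc (Fin.last m) = c ((i : ℕ) + 1) := by
  rw [horMatrix_apply_of_lt c i.castSucc_lt_last, Fin.val_last, Fin.val_castSucc]
  congr 1
  omega

theorem horMatrix_succ_succ (c : ℕ → K) (i l : Fin m) :
    horMatrix (m + 1) c i.succ l.succ = horMatrix (m + 1) c i.castSucc l.castSucc := by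
  simp [horMatrix]

end HorMatrix

theorem det_horMatrix {K : Type*} [CommRing K] (n : ℕ) (c : ℕ → K) : (horMatrix n c).det = 1 := by
  rw [det_of_isUpperTriangular (isUpperTriangular_horMatrix c)]
  simp only [horMatrix_apply_self, Finset.prod_const_one]

section CompanionMatrix

variable {K : Type*} [NonAssocRing K] {m : ℕ}

theorem mul_companionMatrix_castSucc {ι : Type*} (M : Matrix ι (Fin (m + 1)) K) (c : ℕ → K)
    (i : ι) (l : Fin m) :
    (M * companionMatrix (m + 1) c) i l.castSucc = M i l.succ - M i 0 * c (m - (l : ℕ)) := by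
  simp [mul_apply, Fin.sum_univ_succ, companionMatrix, Fin.val_inj, sub_eq_neg_add]

theorem mul_companionMatrix_last {ι : Type*} (M : Matrix ι (Fin (m + 1)) K) (c : ℕ → K) (i : ι) :
    (M * companionMatrix (m + 1) c) i (Fin.last m) = -(M i 0 * c 0) := by
  have h (j : Fin m) : (j : ℕ) ≠ m := j.isLt.ne
  simp [mul_apply, Fin.sum_univ_succ, companionMatrix, h]

theorem horMatrix_mul_companionMatrix_zero_castSucc (c : ℕ → K) (l : Fin m) :
    (horMatrix (m + 1) c * companionMatrix (m + 1) c) 0 l.castSucc = 0 := by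
  rw [mul_companionMatrix_castSucc, horMatrix_zero_succ, horMatrix_apply_self, one_mul, sub_self]

theorem horMatrix_mul_companionMatrix_zero_last (c : ℕ → K) :
    (horMatrix (m + 1) c * companionMatrix (m + 1) c) 0 (Fin.last m) = -c 0 := by
  rw [mul_companionMatrix_last, horMatrix_apply_self, one_mul]

theorem horMatrix_mul_companionMatrix_succ_castSucc (c : ℕ → K) (i l : Fin m) :
    (horMatrix (m + 1) c * companionMatrix (m + 1) c) i.succ l.castSucc =
      horMatrix (m + 1) c i.castSucc l.castSucc := by
  rw [mul_companionMatrix_castSucc, horMatrix_apply_of_gt c i.succ_pos, zero_mul, sub_zero,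
    horMatrix_succ_succ]

theorem horMatrix_mul_companionMatrix_succ_last (c : ℕ → K) (i : Fin m) :
    (horMatrix (m + 1) c * companionMatrix (m + 1) c) i.succ (Fin.last m) = 0 := by
  rw [mul_companionMatrix_last, horMatrix_apply_of_gt c i.succ_pos, zero_mul, neg_zero]

end CompanionMatrix

theorem coeff_zero_mul_coeff_sub {K : Type*} [MulOneClass K] {n : ℕ} {c : ℕ → K} {ε : K}
    (hcn : c n = 1) (hsym : ∀ j ≤ n, c (n - j) = ε * c j) {j : ℕ} (hj : j ≤ n) :
    c 0 * c (n - j) = c j := by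
  have hε : c 0 = ε := by simpa [hcn] using hsym n le_rfl
  simpa [hε, Nat.sub_sub_self hj] using (hsym (n - j) (n.sub_le j)).symm

theorem transpose_horMatrix_mul_companionMatrix_mul_companionMatrix {K : Type*}
    [NonAssocRing K] {n : ℕ} {c : ℕ → K} {ε : K} (hcn : c n = 1)
    (hsym : ∀ j ≤ n, c (n - j) = ε * c j) :
    (horMatrix n c * companionMatrix n c)ᵀ * companionMatrix n c = (horMatrix n c)ᵀ := by
  obtain _ | m := n
  · exact Subsingleton.elim _ _
  ext l a
  cases a using Fin.lastCases with
  | cast a =>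
    rw [mul_companionMatrix_castSucc]
    simp only [transpose_apply]
    cases l using Fin.lastCases with
    | cast l =>
      rw [horMatrix_mul_companionMatrix_succ_castSucc,
        horMatrix_mul_companionMatrix_zero_castSucc, zero_mul, sub_zero]
    | last =>
      have hc : c 0 * c (m - a) = c (a + 1) := by
        simpa using coeff_zero_mul_coeff_sub hcn hsym (Nat.succ_le_succ a.isLt.le)
      rw [horMatrix_mul_companionMatrix_succ_last, horMatrix_mul_companionMatrix_zero_last,
        horMatrix_castSucc_last, neg_mul, zero_sub, neg_neg, hc]
  | last =>
    rw [mul_companionMatrix_last]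
    simp only [transpose_apply]
    cases l using Fin.lastCases with
    | cast l =>
      rw [horMatrix_mul_companionMatrix_zero_castSucc,
        horMatrix_apply_of_gt c l.castSucc_lt_last, zero_mul, neg_zero]
    | last =>
      have hc : c 0 * c 0 = 1 := by
        simpa [hcn] using coeff_zero_mul_coeff_sub hcn hsym le_rfl
      rw [horMatrix_mul_companionMatrix_zero_last, horMatrix_apply_self, neg_mul, neg_neg, hc]

theorem stmt6_general {K : Type*} [CommRing K] {n : ℕ} {c : ℕ → K} {ε : K} (hcn : c n = 1)
    (hsym : ∀ j ≤ n, c (n - j) = ε * c j) :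
    (companionMatrix n c)ᵀ * (horMatrix n c)ᵀ * companionMatrix n c = (horMatrix n c)ᵀ ∧
    (∀ a b : Fin n → K,
      (companionMatrix n c *ᵥ a) ⬝ᵥ ((horMatrix n c)ᵀ *ᵥ (companionMatrix n c *ᵥ b)) =
        a ⬝ᵥ ((horMatrix n c)ᵀ *ᵥ b)) ∧
    horMatrix n c * companionMatrix n c = ((companionMatrix n c)⁻¹)ᵀ * horMatrix n c := by
  have hL : (companionMatrix n c)ᵀ * (horMatrix n c)ᵀ * companionMatrix n c =
      (horMatrix n c)ᵀ := by
    rw [← transpose_mul, transpose_horMatrix_mul_companionMatrix_mul_companionMatrix hcn hsym]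
  have hLt : (companionMatrix n c)ᵀ * horMatrix n c * companionMatrix n c = horMatrix n c := by
    simpa [transpose_mul, Matrix.mul_assoc] using congrArg transpose hL
  refine ⟨hL, fun a b => ?_, ?_⟩
  · rw [mulVec_dotProduct_mulVec_mulVec, hL]
  · exact mul_eq_transpose_inv_mul_of_transpose_mul_mul_eq (by simp [det_horMatrix]) hLt

/-- For a monic real polynomial `p` of degree `n` with (anti-)palindromic
coefficients, the companion matrix `R` of `p` preserves the Seifert form
`L(a,b) = aᵀ Sᵀ b` of the HOR-matrix `S`: `Rᵀ Sᵀ R = Sᵀ`, equivalently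
`S R = R⁻ᵀ S`. -/
theorem stmt6 (n : ℕ) (hn : 1 ≤ n) (k : ℕ) (hk : k = 1 ∨ k = 2)
    (c : ℕ → ℝ) (hcn : c n = 1)
    (hsym : ∀ j ≤ n, c (n - j) = (-1 : ℝ)^(k - 1) * c j)
    (S R : Matrix (Fin n) (Fin n) ℝ)
    (hS : ∀ i j : Fin n, S i j =
      if i = j then 1 else if i < j then c (n - ((j : ℕ) - (i : ℕ))) else 0)
    (hR : ∀ i l : Fin n, R i l =
      if (i : ℕ) = 0 then - c (n - 1 - (l : ℕ))
      else if (i : ℕ) = (l : ℕ) + 1 then 1 else 0) :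
    Rᵀ * Sᵀ * R = Sᵀ ∧
    (∀ a b : Fin n → ℝ,
      (R.mulVec a) ⬝ᵥ (Sᵀ.mulVec (R.mulVec b)) = a ⬝ᵥ (Sᵀ.mulVec b)) ∧
    S * R = (R⁻¹)ᵀ * S := by
  obtain rfl : S = horMatrix n c := Matrix.ext hS
  obtain rfl : R = companionMatrix n c := Matrix.ext hR
  exact stmt6_general hcn hsym
end
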